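/- arXiv:1803.01354 — 2 statements merged into one kernel-verified Lean document; each statement's English description precedes it below -/
import Mathlib

section
/- Let (L, [·,·], α, [p]) be a restricted Hom-Lie superalgebra over F, let H be a Hom-Lie subsuperalgebra of L, and let [p]₁ : H⁰ → H⁰ be a map. Then the following are equivalent: (i) [p]₁ is a p-map on the multiplicative Hom-Lie superalgebra H (with bracket and structure map restricted from L); (ii) there exists a p-semilinear map f : H⁰ → C_L(H) such that x^{[p]₁} = x^{[p]} + f(x) for all x ∈ H⁰. -/
/-! Basic definitions: Hom-Lie superalgebras, restricted structures, etc. -/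

/-- A Hom-Lie superalgebra over a field `F`: a `ℤ/2`-graded vector space with an even
bilinear bracket and an even linear map `α` satisfying super skew-symmetry and the
Hom-super Jacobi identity. -/
structure HomLieSuper (F : Type*) [Field F] (L : Type*) [AddCommGroup L] [Module F L] where
  grade : ZMod 2 → Submodule F L
  internal : DirectSum.IsInternal grade
  bracket : L →ₗ[F] L →ₗ[F] L
  α : L →ₗ[F] L
  bracket_even : ∀ i j : ZMod 2, ∀ x ∈ grade i, ∀ y ∈ grade j, bracket x y ∈ grade (i + j)
  alpha_even : ∀ i : ZMod 2, ∀ x ∈ grade i, α x ∈ grade i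
  skew : ∀ i j : ZMod 2, ∀ x ∈ grade i, ∀ y ∈ grade j,
    bracket x y = (-((-1 : F) ^ (i.val * j.val))) • bracket y x
  jacobi : ∀ i j k : ZMod 2, ∀ x ∈ grade i, ∀ y ∈ grade j, ∀ z ∈ grade k,
    ((-1 : F) ^ (i.val * k.val)) • bracket (α x) (bracket y z)
      + ((-1 : F) ^ (k.val * j.val)) • bracket (α z) (bracket x y)
      + ((-1 : F) ^ (j.val * i.val)) • bracket (α y) (bracket z x) = 0

/-- Coefficient of `λ^j` in `(ad_α (λ•x + y))^k (x)`, where `(ad_α a)(b) = ⁅a, α b⁆`,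
defined by recursion on `k`. -/
def adPolyCoeff {F : Type*} [Field F] {L : Type*} [AddCommGroup L] [Module F L]
    (b : L →ₗ[F] L →ₗ[F] L) (a : L →ₗ[F] L) (x y : L) : ℕ → ℕ → L
  | 0, 0 => x
  | 0, _ + 1 => 0
  | k + 1, 0 => b y (a (adPolyCoeff b a x y k 0))
  | k + 1, j + 1 => b x (a (adPolyCoeff b a x y k j)) + b y (a (adPolyCoeff b a x y k (j + 1)))

/-- A `p`-semilinear map on a subset `V`: `f (k•x + y) = k^p • f x + f y`. -/
def IsPSemilinearOn (F : Type*) [Field F] {L : Type*} [AddCommGroup L] [Module F L]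
    (p : ℕ) (V : Set L) (f : L → L) : Prop :=
  ∀ k : F, ∀ x ∈ V, ∀ y ∈ V, f (k • x + y) = k ^ p • f x + f y

namespace HomLieSuper

variable {F : Type*} [Field F] {L : Type*} [AddCommGroup L] [Module F L]

/-- Multiplicativity: `α ⁅x, y⁆ = ⁅α x, α y⁆`. -/
def Mult (S : HomLieSuper F L) : Prop :=
  ∀ x y : L, S.α (S.bracket x y) = S.bracket (S.α x) (S.α y)

/-- `L⁰ = {x ∈ L₀ | α x = x}` as a set. -/
def zeroSet (S : HomLieSuper F L) : Set L := {x | x ∈ S.grade 0 ∧ S.α x = x}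

/-- `L⁰` as a submodule of `L`. -/
def zeroSub (S : HomLieSuper F L) : Submodule F L where
  carrier := S.zeroSet
  add_mem' := by
    rintro a b ⟨ha0, ha⟩ ⟨hb0, hb⟩
    exact ⟨(S.grade 0).add_mem ha0 hb0, by simp [map_add, ha, hb]⟩
  zero_mem' := ⟨(S.grade 0).zero_mem, by simp⟩
  smul_mem' := by
    rintro c a ⟨ha0, ha⟩
    exact ⟨(S.grade 0).smul_mem c ha0, by simp [map_smul, ha]⟩

/-- `H⁰ = {x ∈ H ∩ L₀ | α x = x}` for a subspace `H`. -/
def zeroOf (S : HomLieSuper F L) (H : Submodule F L) : Set L :=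
  {x | x ∈ H ∧ x ∈ S.grade 0 ∧ S.α x = x}

/-- `ad_α a : b ↦ ⁅a, α b⁆` as an endomorphism of `L`. -/
def adA (S : HomLieSuper F L) (a : L) : Module.End F L := (S.bracket a) ∘ₗ S.α

/-- The `α`-centralizer `C_L(H) = {x | ⁅x, α y⁆ = 0 ∀ y ∈ H}`. -/
def centralizer (S : HomLieSuper F L) (H : Set L) : Set L :=
  {x | ∀ y ∈ H, S.bracket x (S.α y) = 0}

/-- The `α`-center `C(L)`. -/
def center (S : HomLieSuper F L) : Set L := S.centralizer Set.univ

/-- `s_i(x, y)`: `i • s_i(x,y)` is the coefficient of `λ^(i-1)` in `(ad_α (λx+y))^(p-1) (x)`;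
since `0 < i < p` this determines `s_i` as `(i : F)⁻¹` times that coefficient. -/
def sPoly (S : HomLieSuper F L) (p : ℕ) (x y : L) (i : ℕ) : L :=
  ((i : F)⁻¹) • adPolyCoeff S.bracket S.α x y (p - 1) (i - 1)

/-- `pm` is a `p`-map on the subalgebra `H` (with structure restricted from `L`). -/
def IsPMapOn (S : HomLieSuper F L) (p : ℕ) (H : Submodule F L) (pm : L → L) : Prop :=
  (∀ x ∈ S.zeroOf H, pm x ∈ S.zeroOf H) ∧
  (∀ x ∈ S.zeroOf H, ∀ y ∈ H, ((S.adA x) ^ p) y = S.bracket (pm x) (S.α y)) ∧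
  (∀ k : F, ∀ x ∈ S.zeroOf H, pm (k • x) = k ^ p • pm x) ∧
  (∀ x ∈ S.zeroOf H, ∀ y ∈ S.zeroOf H,
    pm (x + y) = pm x + pm y + ∑ i ∈ Finset.Icc 1 (p - 1), S.sPoly p x y i)

/-- `pm` is a `p`-map on `L` itself. -/
def IsPMap (S : HomLieSuper F L) (p : ℕ) (pm : L → L) : Prop := S.IsPMapOn p ⊤ pm

/-- `H` is a Hom-Lie subsuperalgebra: a graded subspace, `α`-invariant, closed under bracket. -/
def IsSub (S : HomLieSuper F L) (H : Submodule F L) : Prop :=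
  (∀ x ∈ H, ∃ x0 ∈ H ⊓ S.grade 0, ∃ x1 ∈ H ⊓ S.grade 1, x = x0 + x1) ∧
  (∀ x ∈ H, S.α x ∈ H) ∧
  (∀ x ∈ H, ∀ y ∈ H, S.bracket x y ∈ H)

/-- `U` is a Hom-Lie ideal: a graded subspace, `α`-invariant, with `⁅U, L⁆ ⊆ U`. -/
def IsIdeal (S : HomLieSuper F L) (U : Submodule F L) : Prop :=
  (∀ x ∈ U, ∃ x0 ∈ U ⊓ S.grade 0, ∃ x1 ∈ U ⊓ S.grade 1, x = x0 + x1) ∧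
  (∀ x ∈ U, S.α x ∈ U) ∧
  (∀ x ∈ U, ∀ y : L, S.bracket x y ∈ U)

/-- `L` is restrictable: `(ad_α x)^p ∈ ad_α L⁰` for every `x ∈ L⁰`. -/
def Restrictable (S : HomLieSuper F L) (p : ℕ) : Prop :=
  ∀ x ∈ S.zeroSet, ∃ y ∈ S.zeroSet, (S.adA x) ^ p = S.adA y

/-- The subalgebra `H` is restrictable (with structure restricted from `L`). -/
def RestrictableOn (S : HomLieSuper F L) (p : ℕ) (H : Submodule F L) : Prop :=
  ∀ x ∈ S.zeroOf H, ∃ y ∈ S.zeroOf H, ∀ z ∈ H, ((S.adA x) ^ p) z = S.bracket y (S.α z)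

end HomLieSuper

/-- A morphism of Hom-Lie superalgebras: an even linear map compatible with the brackets
and intertwining the structure maps. -/
def IsHomLieSuperMorphism {F : Type*} [Field F] {L : Type*} [AddCommGroup L] [Module F L]
    {G : Type*} [AddCommGroup G] [Module F G]
    (S : HomLieSuper F L) (T : HomLieSuper F G) (φ : L →ₗ[F] G) : Prop :=
  (∀ i : ZMod 2, ∀ x ∈ S.grade i, φ x ∈ T.grade i) ∧
  (∀ u v : L, φ (S.bracket u v) = T.bracket (φ u) (φ v)) ∧
  (∀ x : L, φ (S.α x) = T.α (φ x))

/-- A Lie superalgebra over `F` (bracket even bilinear, super skew-symmetric,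
super Jacobi identity). -/
structure LieSuper (F : Type*) [Field F] (L : Type*) [AddCommGroup L] [Module F L] where
  grade : ZMod 2 → Submodule F L
  internal : DirectSum.IsInternal grade
  bracket : L →ₗ[F] L →ₗ[F] L
  bracket_even : ∀ i j : ZMod 2, ∀ x ∈ grade i, ∀ y ∈ grade j, bracket x y ∈ grade (i + j)
  skew : ∀ i j : ZMod 2, ∀ x ∈ grade i, ∀ y ∈ grade j,
    bracket x y = (-((-1 : F) ^ (i.val * j.val))) • bracket y x
  jacobi : ∀ i j k : ZMod 2, ∀ x ∈ grade i, ∀ y ∈ grade j, ∀ z ∈ grade k,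
    ((-1 : F) ^ (i.val * k.val)) • bracket x (bracket y z)
      + ((-1 : F) ^ (k.val * j.val)) • bracket z (bracket x y)
      + ((-1 : F) ^ (j.val * i.val)) • bracket y (bracket z x) = 0

namespace LieSuper

variable {F : Type*} [Field F] {L : Type*} [AddCommGroup L] [Module F L]

/-- `ad x : b ↦ ⁅x, b⁆`. -/
def ad (S : LieSuper F L) (x : L) : Module.End F L := S.bracket x

/-- `s_i(x, y)` for a Lie superalgebra: `i • s_i(x,y)` is the coefficient of `λ^(i-1)` in
`(ad (λx+y))^(p-1) (x)`. -/
def sPoly (S : LieSuper F L) (p : ℕ) (x y : L) (i : ℕ) : L :=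
  ((i : F)⁻¹) • adPolyCoeff S.bracket LinearMap.id x y (p - 1) (i - 1)

/-- `pm` is a `p`-map making `S` a restricted Lie superalgebra. -/
def IsPMap (S : LieSuper F L) (p : ℕ) (pm : L → L) : Prop :=
  (∀ x ∈ S.grade 0, S.ad x ^ p = S.ad (pm x)) ∧
  (∀ k : F, ∀ x ∈ S.grade 0, pm (k • x) = k ^ p • pm x) ∧
  (∀ x ∈ S.grade 0, ∀ y ∈ S.grade 0,
    pm (x + y) = pm x + pm y + ∑ i ∈ Finset.Icc 1 (p - 1), S.sPoly p x y i)

end LieSuper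

/-- A Hom-associative superalgebra over `F`. -/
structure HomAssocSuper (F : Type*) [Field F] (A : Type*) [AddCommGroup A] [Module F A] where
  grade : ZMod 2 → Submodule F A
  internal : DirectSum.IsInternal grade
  mul : A →ₗ[F] A →ₗ[F] A
  α : A →ₗ[F] A
  mul_even : ∀ i j : ZMod 2, ∀ x ∈ grade i, ∀ y ∈ grade j, mul x y ∈ grade (i + j)
  alpha_even : ∀ i : ZMod 2, ∀ x ∈ grade i, α x ∈ grade i
  assoc : ∀ x y z : A, mul (α x) (mul y z) = mul (mul x y) (α z)

/-!
The sums `∑ s_i(x, y)` in the additivity axiom depend only on the bracket and `α`, not on the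
`p`-map, so they cancel in the difference of two `p`-maps, which is therefore `p`-semilinear.
Likewise the brackets of both values at `x` with `α y` equal `(ad_α x)^p y`, so the difference is
`C_L(H)`-valued. Thus the `p`-maps on `H` with values in `L`, when there are any, form a torsor
under the `p`-semilinear maps `H⁰ → C_L(H)`.
-/

namespace IsPSemilinearOn

variable {F : Type*} [Field F] {L : Type*} [AddCommGroup L] [Module F L]
  {p : ℕ} {V : Set L} {f : L → L} {x y : L}

theorem map_add (hf : IsPSemilinearOn F p V f) (hx : x ∈ V) (hy : y ∈ V) :
    f (x + y) = f x + f y := by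
  simpa only [one_smul, one_pow] using hf 1 x hx y hy

theorem map_zero (hf : IsPSemilinearOn F p V f) (h0 : 0 ∈ V) : f 0 = 0 := by
  have h : f 0 = f 0 + f 0 := by simpa only [add_zero] using hf.map_add h0 h0
  exact left_eq_add.mp h

theorem map_smul (hf : IsPSemilinearOn F p V f) (h0 : 0 ∈ V) (k : F) (hx : x ∈ V) :
    f (k • x) = k ^ p • f x := by
  simpa only [add_zero, hf.map_zero h0] using hf k x hx 0 h0

end IsPSemilinearOn

namespace HomLieSuper

variable {F : Type*} [Field F] {L : Type*} [AddCommGroup L] [Module F L]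
  {S : HomLieSuper F L} {p : ℕ} {H K : Submodule F L} {f pm pm1 : L → L} {x y : L}

theorem zero_mem_zeroOf : 0 ∈ S.zeroOf H :=
  (H ⊓ S.zeroSub).zero_mem

theorem add_mem_zeroOf (hx : x ∈ S.zeroOf H) (hy : y ∈ S.zeroOf H) : x + y ∈ S.zeroOf H :=
  (H ⊓ S.zeroSub).add_mem hx hy

theorem smul_mem_zeroOf (k : F) (hx : x ∈ S.zeroOf H) : k • x ∈ S.zeroOf H :=
  (H ⊓ S.zeroSub).smul_mem k hx

theorem zeroOf_mono (hHK : H ≤ K) : S.zeroOf H ⊆ S.zeroOf K :=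
  fun _ hx => ⟨hHK hx.1, hx.2⟩

/-- `pm` is a `p`-map on `H` with values in `L`: it satisfies the axioms of a `p`-map on `H`, but
need not send `H⁰` into itself. In contrast to `IsPMapOn`, this notion passes from a subspace to a
smaller one. -/
structure IsPMapInto (S : HomLieSuper F L) (p : ℕ) (H : Submodule F L) (pm : L → L) : Prop where
  adA_pow_apply : ∀ x ∈ S.zeroOf H, ∀ y ∈ H, (S.adA x ^ p) y = S.bracket (pm x) (S.α y)
  map_smul : ∀ k : F, ∀ x ∈ S.zeroOf H, pm (k • x) = k ^ p • pm x
  map_add : ∀ x ∈ S.zeroOf H, ∀ y ∈ S.zeroOf H,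
    pm (x + y) = pm x + pm y + ∑ i ∈ Finset.Icc 1 (p - 1), S.sPoly p x y i

theorem isPMapOn_iff_mapsTo_and_isPMapInto :
    S.IsPMapOn p H pm ↔ Set.MapsTo pm (S.zeroOf H) (S.zeroOf H) ∧ S.IsPMapInto p H pm :=
  ⟨fun ⟨hmaps, had, hsmul, hadd⟩ => ⟨hmaps, had, hsmul, hadd⟩,
    fun ⟨hmaps, had, hsmul, hadd⟩ => ⟨hmaps, had, hsmul, hadd⟩⟩

namespace IsPMapInto

theorem mono (hHK : H ≤ K) (hpm : S.IsPMapInto p K pm) : S.IsPMapInto p H pm where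
  adA_pow_apply x hx y hy := hpm.adA_pow_apply x (zeroOf_mono hHK hx) y (hHK hy)
  map_smul k x hx := hpm.map_smul k x (zeroOf_mono hHK hx)
  map_add x hx y hy := hpm.map_add x (zeroOf_mono hHK hx) y (zeroOf_mono hHK hy)

theorem congr (hpm : S.IsPMapInto p H pm) (heq : Set.EqOn pm1 pm (S.zeroOf H)) :
    S.IsPMapInto p H pm1 where
  adA_pow_apply x hx y hy := by rw [heq hx, hpm.adA_pow_apply x hx y hy]
  map_smul k x hx := by rw [heq (smul_mem_zeroOf k hx), heq hx, hpm.map_smul k x hx]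
  map_add x hx y hy := by
    rw [heq (add_mem_zeroOf hx hy), heq hx, heq hy, hpm.map_add x hx y hy]

theorem sub_mem_centralizer (hpm1 : S.IsPMapInto p H pm1) (hpm : S.IsPMapInto p H pm)
    (hx : x ∈ S.zeroOf H) : pm1 x - pm x ∈ S.centralizer (H : Set L) := by
  intro y hy
  rw [map_sub, LinearMap.sub_apply, ← hpm1.adA_pow_apply x hx y hy,
    ← hpm.adA_pow_apply x hx y hy, sub_self]

theorem isPSemilinearOn_sub (hpm1 : S.IsPMapInto p H pm1) (hpm : S.IsPMapInto p H pm) :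
    IsPSemilinearOn F p (S.zeroOf H) (pm1 - pm) := by
  intro k x hx y hy
  have hkx : k • x ∈ S.zeroOf H := smul_mem_zeroOf k hx
  simp only [Pi.sub_apply, hpm1.map_add _ hkx y hy, hpm.map_add _ hkx y hy,
    hpm1.map_smul k x hx, hpm.map_smul k x hx, smul_sub]
  abel

theorem add_isPSemilinearOn (hpm : S.IsPMapInto p H pm)
    (hcent : ∀ x ∈ S.zeroOf H, f x ∈ S.centralizer (H : Set L))
    (hsemi : IsPSemilinearOn F p (S.zeroOf H) f) : S.IsPMapInto p H (pm + f) where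
  adA_pow_apply x hx y hy := by
    rw [Pi.add_apply, _root_.map_add, LinearMap.add_apply, hcent x hx y hy, add_zero,
      hpm.adA_pow_apply x hx y hy]
  map_smul k x hx := by
    rw [Pi.add_apply, Pi.add_apply, hpm.map_smul k x hx,
      hsemi.map_smul zero_mem_zeroOf k hx, smul_add]
  map_add x hx y hy := by
    rw [Pi.add_apply, Pi.add_apply, Pi.add_apply, hpm.map_add x hx y hy, hsemi.map_add hx hy]
    abel

end IsPMapInto

end HomLieSuper

theorem restricted_sub_pmap_iff_general {F : Type*} [Field F] {L : Type*} [AddCommGroup L]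
    [Module F L] (p : ℕ) [Fact p.Prime] [CharP F p] (S : HomLieSuper F L) (H : Submodule F L)
    (pm : L → L) (hpm : S.IsPMapInto p H pm) (pm1 : L → L) :
    S.IsPMapInto p H pm1 ↔
      ∃ f : L → L, (∀ x ∈ S.zeroOf H, f x ∈ S.centralizer (H : Set L)) ∧
        IsPSemilinearOn F p (S.zeroOf H) f ∧
        ∀ x ∈ S.zeroOf H, pm1 x = pm x + f x := by
  constructor
  · intro hpm1
    exact ⟨pm1 - pm, fun x hx => hpm1.sub_mem_centralizer hpm hx, hpm1.isPSemilinearOn_sub hpm,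
      fun x _ => (add_sub_cancel (pm x) (pm1 x)).symm⟩
  · rintro ⟨f, hcent, hsemi, heq⟩
    exact (hpm.add_isPSemilinearOn hcent hsemi).congr heq

/-- Let `(L, ⁅,⁆, α, [p])` be a restricted Hom-Lie superalgebra, `H` a
Hom-Lie subsuperalgebra, and `[p]₁ : H⁰ → H⁰` a map. Then `[p]₁` is a `p`-map on `H` iff
there is a `p`-semilinear map `f : H⁰ → C_L(H)` with `x^{[p]₁} = x^{[p]} + f x` on `H⁰`. -/
theorem restricted_sub_pmap_iff {F : Type*} [Field F] {L : Type*} [AddCommGroup L] [Module F L]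
    (p : ℕ) [Fact p.Prime] [CharP F p] (hp : 3 < p)
    (S : HomLieSuper F L) (hmult : S.Mult) (pm : L → L) (hpm : S.IsPMap p pm)
    (H : Submodule F L) (hH : S.IsSub H)
    (pm1 : L → L) (hpm1 : ∀ x ∈ S.zeroOf H, pm1 x ∈ S.zeroOf H) :
    S.IsPMapOn p H pm1 ↔
      ∃ f : L → L, (∀ x ∈ S.zeroOf H, f x ∈ S.centralizer (H : Set L)) ∧
        IsPSemilinearOn F p (S.zeroOf H) f ∧
        ∀ x ∈ S.zeroOf H, pm1 x = pm x + f x :=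
  (HomLieSuper.isPMapOn_iff_mapsTo_and_isPMapInto.trans (and_iff_right hpm1)).trans <|
    restricted_sub_pmap_iff_general p S H pm
      ((HomLieSuper.isPMapOn_iff_mapsTo_and_isPMapInto.mp hpm).2.mono le_top) pm1
end

section
/- Let (L, [·,·], α) be a multiplicative Hom-Lie superalgebra over F and let U and W be Hom-Lie ideals of L such that L = U ⊕ W as an internal direct sum of graded subspaces. Then L is restrictable if and only if both U and W (each a multiplicative Hom-Lie superalgebra with bracket and structure map restricted from L) are restrictable. -/
/-!
Both the grading and `α` respect the decomposition `L = U ⊕ W`, so the components of an element of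
`L⁰` lie in `U⁰` and `W⁰`. Since `⁅U, W⁆ ⊆ U ⊓ W = ⊥`, for `u ∈ U` and `w ∈ W` the powers of
`ad_α (u + w)` agree with those of `ad_α u` on `U` and with those of `ad_α w` on `W`. Hence an
identity `(ad_α x)^p = ad_α y` with `x, y ∈ L⁰` amounts to one identity for the `U`-components on
`U` and one for the `W`-components on `W`.
-/

theorem eqOn_pow_of_eqOn_of_mapsTo {R M : Type*} [Semiring R] [AddCommMonoid M] [Module R M]
    {f g : Module.End R M} {s : Set M} (hfg : Set.EqOn f g s) (hg : Set.MapsTo g s s) (n : ℕ) :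
    Set.EqOn ⇑(f ^ n) ⇑(g ^ n) s := by
  induction n with
  | zero => exact fun _ _ => rfl
  | succ n ih =>
    intro x hx
    rw [pow_succ, pow_succ, Module.End.mul_apply, Module.End.mul_apply, hfg hx, ih (hg hx)]

theorem map_eq_self_of_map_add_eq_self {R M : Type*} [Ring R] [AddCommGroup M] [Module R M]
    {U W : Submodule R M} (hUW : Disjoint U W) {f : Module.End R M}
    (hfU : ∀ x ∈ U, f x ∈ U) (hfW : ∀ x ∈ W, f x ∈ W) {u w : M} (hu : u ∈ U) (hw : w ∈ W)
    (h : f (u + w) = u + w) : f u = u := by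
  have hsub : (f u - u) + (f w - w) = 0 := by
    rw [sub_add_sub_comm, ← map_add, h, sub_self]
  exact sub_eq_zero.1 (Submodule.disjoint_iff_add_eq_zero.1 hUW
    (U.sub_mem (hfU u hu) hu) (W.sub_mem (hfW w hw) hw) hsub).1

namespace HomLieSuper

variable {F : Type*} [Field F] {L : Type*} [AddCommGroup L] [Module F L]
  {S : HomLieSuper F L} {U W : Submodule F L}

/-- `U` is a graded subspace: it contains the even and odd components of its elements. This is the
first clause of `IsSub` and `IsIdeal`. -/
def IsGraded (S : HomLieSuper F L) (U : Submodule F L) : Prop :=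
  ∀ x ∈ U, ∃ x0 ∈ U ⊓ S.grade 0, ∃ x1 ∈ U ⊓ S.grade 1, x = x0 + x1

theorem disjoint_grade_zero_one (S : HomLieSuper F L) : Disjoint (S.grade 0) (S.grade 1) :=
  S.internal.submodule_iSupIndep.pairwiseDisjoint zero_ne_one

theorem IsGraded.mem_grade_zero_of_add_mem (hU : S.IsGraded U) (hW : S.IsGraded W)
    (hUW : Disjoint U W) {u w : L} (hu : u ∈ U) (hw : w ∈ W) (h : u + w ∈ S.grade 0) :
    u ∈ S.grade 0 := by
  obtain ⟨u0, ⟨-, hu0⟩, u1, ⟨hu1U, hu1⟩, rfl⟩ := hU u hu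
  obtain ⟨w0, ⟨-, hw0⟩, w1, ⟨hw1W, hw1⟩, rfl⟩ := hW w hw
  rw [add_add_add_comm] at h
  have heven : u1 + w1 ∈ S.grade 0 :=
    ((S.grade 0).add_mem_iff_right ((S.grade 0).add_mem hu0 hw0)).1 h
  have hodd : u1 + w1 ∈ S.grade 1 := (S.grade 1).add_mem hu1 hw1
  have hsum : u1 + w1 = 0 := Submodule.disjoint_def.1 S.disjoint_grade_zero_one _ heven hodd
  have hu1_zero : u1 = 0 := (Submodule.disjoint_iff_add_eq_zero.1 hUW hu1U hw1W hsum).1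
  rwa [hu1_zero, add_zero]

theorem IsSub.mem_zeroOf_of_add_mem_zeroSet (hU : S.IsSub U) (hW : S.IsSub W)
    (hUW : Disjoint U W) {u w : L} (hu : u ∈ U) (hw : w ∈ W) (h : u + w ∈ S.zeroSet) :
    u ∈ S.zeroOf U :=
  ⟨hu, IsGraded.mem_grade_zero_of_add_mem hU.1 hW.1 hUW hu hw h.1,
    map_eq_self_of_map_add_eq_self hUW hU.2.1 hW.2.1 hu hw h.2⟩

theorem IsSub.exists_zeroOf_add_zeroOf (hU : S.IsSub U) (hW : S.IsSub W)
    (hUW : IsCompl U W) {x : L} (hx : x ∈ S.zeroSet) :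
    ∃ u ∈ S.zeroOf U, ∃ w ∈ S.zeroOf W, u + w = x := by
  obtain ⟨u, w, hu, hw, rfl⟩ := Submodule.codisjoint_iff_exists_add_eq.1 hUW.codisjoint x
  exact ⟨u, hU.mem_zeroOf_of_add_mem_zeroSet hW hUW.disjoint hu hw hx,
    w, hW.mem_zeroOf_of_add_mem_zeroSet hU hUW.disjoint.symm hw hu (add_comm u w ▸ hx), rfl⟩

theorem IsIdeal.isSub (hU : S.IsIdeal U) : S.IsSub U :=
  ⟨hU.1, hU.2.1, fun x hx y _ => hU.2.2 x hx y⟩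

/-- `IsIdeal` only gives `⁅U, L⁆ ⊆ U`; since skew-symmetry is available for homogeneous elements
only, the other inclusion needs `U` to be graded. -/
theorem IsIdeal.bracket_mem_right (hU : S.IsIdeal U) (x : L) {u : L} (hu : u ∈ U) :
    S.bracket x u ∈ U := by
  have homogeneous : ∀ i j : ZMod 2, ∀ a ∈ S.grade i, ∀ b ∈ U ⊓ S.grade j,
      S.bracket a b ∈ U := by
    rintro i j a ha b ⟨hbU, hb⟩
    rw [S.skew i j a ha b hb]
    exact U.smul_mem _ (hU.2.2 b hbU a)
  obtain ⟨u0, hu0, u1, hu1, rfl⟩ := hU.1 u hu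
  have hx : x ∈ ⨆ i, S.grade i := S.internal.submodule_iSup_eq_top ▸ Submodule.mem_top
  induction hx using Submodule.iSup_induction' with
  | mem i a ha =>
    rw [map_add]
    exact U.add_mem (homogeneous i 0 a ha u0 hu0) (homogeneous i 1 a ha u1 hu1)
  | zero =>
    rw [LinearMap.map_zero₂]
    exact U.zero_mem
  | add a b _ _ ha hb =>
    rw [LinearMap.map_add₂]
    exact U.add_mem ha hb

theorem IsIdeal.bracket_eq_zero_of_disjoint (hU : S.IsIdeal U) (hW : S.IsIdeal W)
    (hUW : Disjoint U W) {u w : L} (hu : u ∈ U) (hw : w ∈ W) : S.bracket u w = 0 :=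
  Submodule.disjoint_def.1 hUW _ (hU.2.2 u hu w) (hW.bracket_mem_right u hw)

theorem IsIdeal.mapsTo_adA (hU : S.IsIdeal U) (x : L) : Set.MapsTo (S.adA x) U U :=
  fun z hz => hU.bracket_mem_right x (hU.2.1 z hz)

theorem IsIdeal.eqOn_adA_add (hU : S.IsIdeal U) (hW : S.IsIdeal W) (hUW : Disjoint U W)
    (x : L) {w : L} (hw : w ∈ W) : Set.EqOn (S.adA (x + w)) (S.adA x) U := by
  intro z hz
  have hwz : S.bracket w (S.α z) = 0 :=
    hW.bracket_eq_zero_of_disjoint hU hUW.symm hw (hU.2.1 z hz)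
  simp only [adA, LinearMap.comp_apply, map_add, LinearMap.add_apply, hwz, add_zero]

theorem IsIdeal.eqOn_adA_add_pow (hU : S.IsIdeal U) (hW : S.IsIdeal W) (hUW : Disjoint U W)
    (x : L) {w : L} (hw : w ∈ W) (n : ℕ) : Set.EqOn ⇑(S.adA (x + w) ^ n) ⇑(S.adA x ^ n) U :=
  eqOn_pow_of_eqOn_of_mapsTo (hU.eqOn_adA_add hW hUW x hw) (hU.mapsTo_adA x) n

theorem IsIdeal.eqOn_adA_add_pow_of_eqOn (hU : S.IsIdeal U) (hW : S.IsIdeal W)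
    (hUW : Disjoint U W) {x y w w' : L} (hw : w ∈ W) (hw' : w' ∈ W) {n : ℕ}
    (h : Set.EqOn ⇑(S.adA x ^ n) (S.adA y) U) :
    Set.EqOn ⇑(S.adA (x + w) ^ n) (S.adA (y + w')) U :=
  ((hU.eqOn_adA_add_pow hW hUW x hw n).trans h).trans (hU.eqOn_adA_add hW hUW y hw').symm

theorem Restrictable.restrictableOn_of_isCompl {n : ℕ} (h : S.Restrictable n)
    (hU : S.IsIdeal U) (hW : S.IsIdeal W) (hUW : IsCompl U W) : S.RestrictableOn n U := by
  intro x hx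
  obtain ⟨y, hy, hxy⟩ := h x hx.2
  obtain ⟨u, hu, w, hw, rfl⟩ := hU.isSub.exists_zeroOf_add_zeroOf hW.isSub hUW hy
  exact ⟨u, hu, hxy ▸ hU.eqOn_adA_add hW hUW.disjoint u hw.1⟩

theorem Restrictable.of_isCompl {n : ℕ} (hU : S.IsIdeal U) (hW : S.IsIdeal W)
    (hUW : IsCompl U W) (hRU : S.RestrictableOn n U) (hRW : S.RestrictableOn n W) :
    S.Restrictable n := by
  intro x hx
  obtain ⟨u, hu, w, hw, rfl⟩ := hU.isSub.exists_zeroOf_add_zeroOf hW.isSub hUW hx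
  obtain ⟨u', hu', hEu⟩ := hRU u hu
  obtain ⟨w', hw', hEw⟩ := hRW w hw
  refine ⟨u' + w', S.zeroSub.add_mem hu'.2 hw'.2,
    LinearMap.ext_on_codisjoint hUW.codisjoint ?eqOnU ?eqOnW⟩
  case eqOnU => exact hU.eqOn_adA_add_pow_of_eqOn hW hUW.disjoint hw.1 hw'.1 hEu
  case eqOnW =>
    rw [add_comm u w, add_comm u' w']
    exact hW.eqOn_adA_add_pow_of_eqOn hU hUW.disjoint.symm hu.1 hu'.1 hEw

end HomLieSuper

theorem restrictable_directSum_ideals_general {F : Type*} [Field F] {L : Type*} [AddCommGroup L]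
    [Module F L] (n : ℕ) (S : HomLieSuper F L) (U W : Submodule F L)
    (hU : S.IsIdeal U) (hW : S.IsIdeal W) (hUW : IsCompl U W) :
    S.Restrictable n ↔ (S.RestrictableOn n U ∧ S.RestrictableOn n W) :=
  ⟨fun h => ⟨h.restrictableOn_of_isCompl hU hW hUW, h.restrictableOn_of_isCompl hW hU hUW.symm⟩,
    fun h => HomLieSuper.Restrictable.of_isCompl hU hW hUW h.1 h.2⟩

/-- If `L = U ⊕ W` is a direct sum of Hom-Lie ideals, then `L` is
restrictable iff both `U` and `W` are restrictable. -/
theorem restrictable_directSum_ideals {F : Type*} [Field F] {L : Type*} [AddCommGroup L]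
    [Module F L] (p : ℕ) [Fact p.Prime] [CharP F p] (hp : 3 < p)
    (S : HomLieSuper F L) (hmult : S.Mult)
    (U W : Submodule F L) (hU : S.IsIdeal U) (hW : S.IsIdeal W)
    (hdisj : U ⊓ W = ⊥) (hsum : U ⊔ W = ⊤) :
    S.Restrictable p ↔ (S.RestrictableOn p U ∧ S.RestrictableOn p W) :=
  restrictable_directSum_ideals_general p S U W hU hW (IsCompl.of_eq hdisj hsum)
end
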